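/- There is a universal constant κ > 0 such that the following holds. Let k ≥ 2 be an integer, let 𝒳 and 𝒴 be finite nonempty sets, let f : 𝒳 × 𝒴 → {1,…,k}, and let ε ∈ (0, 1/6). Define f' : 𝒳 × 𝒴 → [0,1] by f'(x,y) := f(x,y)/k, and let d := 𝒫_{ε²/(576 k²)}(f') be the (ε²/(576k²))-pseudo-dimension of f'. Let μ be any probability distribution (possibly non-product) on 𝒳 × 𝒴 and let (X, Y) be distributed according to μ. Then there exist a positive integer N, a function a : 𝒳 → {1,…,N}, and a function b : {1,…,N} × 𝒴 → {1,…,k}, such that Pr_{(x,y)←μ}[ b(a(x), y) ≠ f(x, y) ] ≤ 3ε and log₂ N ≤ κ · (k⁴/ε⁵) · ( log₂(1/ε) + d · log₂²(dk/ε) ) · ( I(X : Y) + log₂ k ). -/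

import Mathlib

/-!
The protocol sends the index of a nearby element of a net. Let `ν = μ_Y`, `I = I(X : Y)` and
`δ = 2 ^ (-(I + 1) / (3 ε))`. Take a maximal set `T` of inputs of Alice whose functions `f x` are
pairwise at `ν`-distance more than `δ`, where the distance is the probability of disagreement.
Alice sends the index of some `t ∈ T` with `f t` within `δ` of `f x`, and Bob outputs `f t y`.

*Error.* Under the product `μ_X × μ_Y` the event `f t y ≠ f x y` has probability at most `δ`.
Mutual information is the relative entropy of `μ` from that product, so by its variational lower
bound the probability `p` of the event under `μ` satisfies `p * log₂ (1 / δ) ≤ I + 1`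
(`prob_mul_le_mutInf_add_one`), that is `p ≤ 3 ε`.

*Communication.* By the probabilistic method about `2 ln |T| / δ` samples from `ν` separate all of
`T` (`exists_separating_sample`). Since `f` takes integer values and the scale is far below
`1 / (2 k)`, Sauer–Shelah for the subgraphs of the `f x` bounds the number of restrictions to `m`
points by `(m k + 1) ^ d` (`card_le_of_separating`). Hence `ln |T| ≤ 2 d ln (12 k d / δ)`
(`log_le_of_le_pow`), and `log₂ (1 / δ) = (I + 1) / (3 ε)` gives the claim with `κ = 1`.
-/


/-- Shannon entropy (base 2) of a finitely supported probability mass function. -/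
noncomputable def shEnt {α : Type*} [Fintype α] (p : α → ℝ) : ℝ :=
  ∑ a, -(p a * Real.logb 2 (p a))

/-- Mutual information `I(X : Y) = S(X) + S(Y) − S(X,Y)` of a joint probability
mass function on a product of finite sets. -/
noncomputable def mutInf {α β : Type*} [Fintype α] [Fintype β] (p : α × β → ℝ) : ℝ :=
  shEnt (fun a => ∑ b, p (a, b)) + shEnt (fun b => ∑ a, p (a, b)) - shEnt p

/-- The family `{F_x : x ∈ 𝒳}` of `[0,1]`-valued functions `γ`-shatters `S ⊆ 𝒴`:
there are witnesses `w s ∈ [0,1]` for `s ∈ S` such that for every `R ⊆ S` there is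
an `x` with `F x s > w s + γ` for `s ∈ R` and `F x s < w s − γ` for `s ∈ S \ R`. -/
def PseudoShatters {𝒳 𝒴 : Type*} (γ : ℝ) (F : 𝒳 → 𝒴 → ℝ) (S : Finset 𝒴) : Prop :=
  ∃ w : 𝒴 → ℝ, (∀ s ∈ S, 0 ≤ w s ∧ w s ≤ 1) ∧
    ∀ R ⊆ S, ∃ x : 𝒳, ∀ s ∈ S,
      (s ∈ R → F x s > w s + γ) ∧ (s ∉ R → F x s < w s - γ)

/-! ### Sauer–Shelah bound for integer-valued classes -/

/-- Sauer–Shelah in the form `|𝒜| ≤ (|α| + 1) ^ d`. -/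
theorem card_family_le {α : Type*} [Fintype α] [DecidableEq α] (𝒜 : Finset (Finset α)) (d : ℕ)
    (h : ∀ s, 𝒜.Shatters s → s.card ≤ d) : 𝒜.card ≤ (Fintype.card α + 1) ^ d := by
  have hv : 𝒜.vcDim ≤ d := Finset.sup_le fun s hs => h s (Finset.mem_shatterer.1 hs)
  calc 𝒜.card ≤ 𝒜.shatterer.card := Finset.card_le_card_shatterer 𝒜
    _ ≤ ∑ i ∈ Finset.Iic 𝒜.vcDim, (Fintype.card α).choose i := Finset.card_shatterer_le_sum_vcDim
    _ ≤ ∑ i ∈ Finset.range (d + 1), (Fintype.card α).choose i := by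
        refine Finset.sum_le_sum_of_subset fun i hi => ?_
        simp only [Finset.mem_Iic, Finset.mem_range] at *
        omega
    _ ≤ ∑ i ∈ Finset.range (d + 1), (Fintype.card α) ^ i * 1 ^ (d - i) * d.choose i := by
        refine Finset.sum_le_sum fun i hi => ?_
        have hi' : i ≤ d := by simpa [Nat.lt_succ_iff] using hi
        calc (Fintype.card α).choose i ≤ Fintype.card α ^ i := Nat.choose_le_pow _ _
          _ ≤ Fintype.card α ^ i * 1 ^ (d - i) * d.choose i := by
            rw [one_pow, mul_one]
            exact Nat.le_mul_of_pos_right _ (Nat.choose_pos hi')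
    _ = (Fintype.card α + 1) ^ d := (add_pow _ _ _).symm

/-- If the functions `f x`, `x ∈ T`, have pairwise distinct restrictions to `m` sample points, then
their number is polynomial in `m k`. The subgraph family `{(i, t) : t < f x (ω i)}` has
VC dimension at most `d`, because a shattered set of pairs meets each fibre over a point of `𝒴` at
most once and is then pseudo-shattered with witnesses halfway between consecutive values. -/
theorem card_le_of_separating {𝒳 𝒴 : Type*} (k : ℕ) (hk : 0 < k)
    (f : 𝒳 → 𝒴 → ℕ) (hf : ∀ x y, f x y ∈ Finset.Icc 1 k) (γ : ℝ) (hγ : γ * (2 * k) < 1) (d : ℕ)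
    (hd : ∀ S : Finset 𝒴, PseudoShatters γ (fun x y => (f x y : ℝ) / k) S → S.card ≤ d)
    (T : Finset 𝒳) (m : ℕ) (ω : Fin m → 𝒴)
    (hsep : ∀ x ∈ T, ∀ x' ∈ T, (∀ i, f x (ω i) = f x' (ω i)) → x = x') :
    T.card ≤ (m * k + 1) ^ d := by
  classical
  set A : 𝒳 → Finset (Fin m × Fin k) :=
    fun x => Finset.univ.filter fun p => (p.2 : ℕ) < f x (ω p.1) with hA
  have hinj : Set.InjOn A T := by
    intro x hx x' hx' hxx
    refine hsep x hx x' hx' fun i => ?_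
    have key : ∀ t : Fin k, (t : ℕ) < f x (ω i) ↔ (t : ℕ) < f x' (ω i) := by
      intro t
      have := Finset.ext_iff.1 hxx (i, t)
      simpa [hA] using this
    have h1 := Finset.mem_Icc.1 (hf x (ω i))
    have h2 := Finset.mem_Icc.1 (hf x' (ω i))
    have k1 := key ⟨f x (ω i) - 1, by omega⟩
    have k2 := key ⟨f x' (ω i) - 1, by omega⟩
    simp only at k1 k2
    omega
  rw [← Finset.card_image_of_injOn hinj]
  have hcard : m * k = Fintype.card (Fin m × Fin k) := by simp
  rw [hcard]
  refine card_family_le _ d fun s hs => ?_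
  -- every trace on `s` is realised by some `x`
  have htr : ∀ t ⊆ s, ∃ x, ∀ p ∈ s, (p ∈ t ↔ (p.2 : ℕ) < f x (ω p.1)) := by
    intro t ht
    obtain ⟨u, hu, rfl⟩ := hs ht
    obtain ⟨x, -, rfl⟩ := Finset.mem_image.1 hu
    exact ⟨x, fun p hp => by simp [hA, hp]⟩
  have hle : ∀ p ∈ s, ∀ q ∈ s, ω p.1 = ω q.1 → p.2 ≤ q.2 → p = q := by
    intro p hp q hq hpq hpq2
    by_contra hne
    obtain ⟨x, hx⟩ := htr {q} (by simpa using hq)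
    have h1 := (hx q hq).1 (by simp)
    have h2 : ¬ (p.2 : ℕ) < f x (ω q.1) := by
      rw [← hpq]
      exact fun h => hne (Finset.mem_singleton.1 ((hx p hp).2 h))
    have : (p.2 : ℕ) ≤ q.2 := hpq2
    omega
  have hinjs : Set.InjOn (fun p : Fin m × Fin k => ω p.1) s := by
    intro p hp q hq hpq
    rcases le_total p.2 q.2 with h | h
    · exact hle p hp q hq hpq h
    · exact (hle q hq p hp hpq.symm h).symm
  rw [← Finset.card_image_of_injOn hinjs]
  apply hd
  have hk' : (0 : ℝ) < k := by exact_mod_cast hk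
  have hw : ∀ y ∈ s.image (fun p : Fin m × Fin k => ω p.1), ∃ p ∈ s, ω p.1 = y := by
    intro y hy
    simpa using hy
  rcases s.eq_empty_or_nonempty with rfl | ⟨p₀, -⟩
  · exact ⟨fun _ => 0, by simp, fun R _ => (htr ∅ (by simp)).imp (by simp)⟩
  have : Nonempty (Fin m × Fin k) := ⟨p₀⟩
  choose! P hPs hPω using hw
  refine ⟨fun y => (((P y).2 : ℕ) + 1 / 2 : ℝ) / k, ?_, ?_⟩
  · intro y _
    have : (((P y).2 : ℕ) : ℝ) + 1 ≤ k := by exact_mod_cast (P y).2.2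
    refine ⟨by positivity, ?_⟩
    rw [div_le_one hk']
    linarith
  · intro R hR
    obtain ⟨x, hx⟩ := htr (s.filter fun p => ω p.1 ∈ R) (Finset.filter_subset _ _)
    refine ⟨x, fun y hy => ?_⟩
    have hyp := hx (P y) (hPs y hy)
    simp only [Finset.mem_filter, hPs y hy, true_and, hPω y hy] at hyp
    constructor
    · intro hyR
      have h1 : (((P y).2 : ℕ) : ℝ) + 1 ≤ f x y := by exact_mod_cast hyp.1 hyR
      rw [gt_iff_lt, ← sub_pos]
      have : (f x y : ℝ) / k - ((((P y).2 : ℕ) + 1 / 2 : ℝ) / k + γ)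
        = (f x y - ((P y).2 : ℕ) - 1 / 2 - γ * k) / k := by field_simp; ring
      rw [this]
      apply div_pos _ hk'
      linarith
    · intro hyR
      have h1 : (f x y : ℝ) ≤ ((P y).2 : ℕ) := by
        exact_mod_cast not_lt.1 fun h => hyR (hyp.2 h)
      rw [← sub_pos]
      have : (((P y).2 : ℕ) + 1 / 2 : ℝ) / k - γ - (f x y : ℝ) / k
        = (((P y).2 : ℕ) + 1 / 2 - f x y - γ * k) / k := by field_simp; ring
      rw [this]
      apply div_pos _ hk'
      linarith

/-! ### Separation by random samples -/

/-- Probabilistic method: `m` independent samples from `ν` separate all pairs of functions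
that are `δ`-far in `ν`-measure, by a union bound over the pairs. -/
theorem exists_separating_sample {𝒳 𝒴 : Type*} [Fintype 𝒴]
    (f : 𝒳 → 𝒴 → ℕ) (ν : 𝒴 → ℝ) (hν : ∀ y, 0 ≤ ν y) (hν1 : ∑ y, ν y = 1) (δ : ℝ)
    (T : Finset 𝒳)
    (hT : ∀ x ∈ T, ∀ x' ∈ T, x ≠ x' → δ < ∑ y, if f x y = f x' y then 0 else ν y)
    (m : ℕ) (hm : (T.card : ℝ) ^ 2 * Real.exp (-(δ * m)) < 1) :
    ∃ ω : Fin m → 𝒴, ∀ x ∈ T, ∀ x' ∈ T, (∀ i, f x (ω i) = f x' (ω i)) → x = x' := by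
  classical
  by_contra! hcon
  set g : 𝒳 × 𝒳 → 𝒴 → ℝ := fun z y => if f z.1 y = f z.2 y then ν y else 0 with hg
  have hg0 : ∀ z y, 0 ≤ g z y := by
    intro z y
    simp only [hg]
    split_ifs <;> simp [hν]
  have h1 : ∀ z ∈ T.offDiag, (∑ y, g z y) ^ m ≤ Real.exp (-(δ * m)) := by
    intro z hz
    obtain ⟨hz1, hz2, hne⟩ := Finset.mem_offDiag.1 hz
    have hsum : ∑ y, g z y + (∑ y, if f z.1 y = f z.2 y then 0 else ν y) = 1 := by
      rw [← hν1, ← Finset.sum_add_distrib]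
      refine Finset.sum_congr rfl fun y _ => ?_
      simp only [hg]
      split_ifs <;> simp
    have := hT _ hz1 _ hz2 hne
    calc (∑ y, g z y) ^ m ≤ (Real.exp (-δ)) ^ m := by
          refine pow_le_pow_left₀ (Finset.sum_nonneg fun y _ => hg0 z y) ?_ m
          have := Real.one_sub_le_exp_neg δ
          linarith
      _ = Real.exp (-(δ * m)) := by
          rw [← Real.exp_nat_mul]
          congr 1
          ring
  have h2 : (1 : ℝ) ≤ ∑ z ∈ T.offDiag, (∑ y, g z y) ^ m := by
    calc (1 : ℝ) = (∑ y, ν y) ^ m := by rw [hν1, one_pow]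
      _ = ∑ ω : Fin m → 𝒴, ∏ i, ν (ω i) := Fintype.sum_pow _ _
      _ ≤ ∑ ω : Fin m → 𝒴, ∑ z ∈ T.offDiag, ∏ i, g z (ω i) := by
          refine Finset.sum_le_sum fun ω _ => ?_
          obtain ⟨x, hx, x', hx', heq, hne⟩ := hcon ω
          have : ∏ i, ν (ω i) = ∏ i, g (x, x') (ω i) :=
            Finset.prod_congr rfl fun i _ => by simp [hg, heq i]
          rw [this]
          exact Finset.single_le_sum (f := fun z => ∏ i, g z (ω i))
            (fun z _ => Finset.prod_nonneg fun i _ => hg0 z _)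
            (Finset.mem_offDiag.2 ⟨hx, hx', hne⟩)
      _ = ∑ z ∈ T.offDiag, (∑ y, g z y) ^ m := by
          rw [Finset.sum_comm]
          exact Finset.sum_congr rfl fun z _ => (Fintype.sum_pow _ _).symm
  have h3 : ∑ z ∈ T.offDiag, (∑ y, g z y) ^ m ≤ T.offDiag.card * Real.exp (-(δ * m)) := by
    rw [← nsmul_eq_mul]
    exact Finset.sum_le_card_nsmul _ _ _ h1
  have h4 : (T.offDiag.card : ℝ) ≤ (T.card : ℝ) ^ 2 := by
    have : T.offDiag.card ≤ T.card ^ 2 := by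
      rw [Finset.offDiag_card, sq]
      exact Nat.sub_le _ _
    exact_mod_cast this
  have h5 := mul_le_mul_of_nonneg_right h4 (Real.exp_pos (-(δ * m))).le
  linarith

/-! ### Mutual information and rare events -/

theorem shEnt_mul_log_two {α : Type*} [Fintype α] (p : α → ℝ) :
    shEnt p * Real.log 2 = -∑ a, p a * Real.log (p a) := by
  have hl2 : 0 < Real.log 2 := Real.log_pos (by norm_num)
  rw [shEnt, Finset.sum_mul, ← Finset.sum_neg_distrib]
  refine Finset.sum_congr rfl fun a _ => ?_
  rw [Real.logb]
  field_simp

/-- Variational (Donsker–Varadhan) lower bound on mutual information: any tilt `h` of the product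
of the marginals with total mass at most one gives `E_μ [log₂ h] ≤ I(X : Y)`. -/
theorem sum_mul_logb_le_mutInf {𝒳 𝒴 : Type*} [Fintype 𝒳] [Fintype 𝒴] (μ : 𝒳 × 𝒴 → ℝ)
    (hμ : ∀ z, 0 ≤ μ z) (hμ1 : ∑ z, μ z = 1) (h : 𝒳 × 𝒴 → ℝ) (hpos : ∀ z, 0 < h z)
    (hh : ∑ z : 𝒳 × 𝒴, (∑ b, μ (z.1, b)) * (∑ a, μ (a, z.2)) * h z ≤ 1) :
    ∑ z, μ z * Real.logb 2 (h z) ≤ mutInf μ := by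
  set μX : 𝒳 → ℝ := fun a => ∑ b, μ (a, b) with hX
  set μY : 𝒴 → ℝ := fun b => ∑ a, μ (a, b) with hY
  have hXs : ∀ z : 𝒳 × 𝒴, μ z ≤ μX z.1 := fun z =>
    Finset.single_le_sum (f := fun b => μ (z.1, b)) (fun b _ => hμ _) (Finset.mem_univ z.2)
  have hYs : ∀ z : 𝒳 × 𝒴, μ z ≤ μY z.2 := fun z =>
    Finset.single_le_sum (f := fun a => μ (a, z.2)) (fun b _ => hμ _) (Finset.mem_univ z.1)
  have hl2 : 0 < Real.log 2 := Real.log_pos (by norm_num)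
  have e1 : ∑ z : 𝒳 × 𝒴, μ z * Real.log (μX z.1) = ∑ a, μX a * Real.log (μX a) := by
    rw [Fintype.sum_prod_type]
    exact Finset.sum_congr rfl fun a _ => by rw [hX, Finset.sum_mul]
  have e2 : ∑ z : 𝒳 × 𝒴, μ z * Real.log (μY z.2) = ∑ b, μY b * Real.log (μY b) := by
    rw [Fintype.sum_prod_type_right]
    exact Finset.sum_congr rfl fun a _ => by rw [hY, Finset.sum_mul]
  have hI : mutInf μ * Real.log 2 = ∑ z, μ z * Real.log (μ z)
      - ∑ z : 𝒳 × 𝒴, μ z * Real.log (μX z.1) - ∑ z : 𝒳 × 𝒴, μ z * Real.log (μY z.2) := by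
    rw [e1, e2, mutInf, sub_mul, add_mul, shEnt_mul_log_two, shEnt_mul_log_two,
      shEnt_mul_log_two]
    ring
  -- pointwise Gibbs inequality `log t ≤ t - 1` with `t = μX μY h / μ`
  have hpt : ∀ z : 𝒳 × 𝒴, μ z * Real.log (μX z.1) + μ z * Real.log (μY z.2)
      + μ z * Real.log (h z) - μ z * Real.log (μ z) ≤ μX z.1 * μY z.2 * h z - μ z := by
    intro z
    rcases (hμ z).eq_or_lt with h0 | h0
    · have hx := hXs z
      have hy := hYs z
      rw [← h0] at hx hy ⊢
      have := mul_nonneg (mul_nonneg hx hy) (hpos z).le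
      simpa using this
    · have hx := h0.trans_le (hXs z)
      have hy := h0.trans_le (hYs z)
      have hz := hpos z
      have hlog := Real.log_le_sub_one_of_pos (x := μX z.1 * μY z.2 * h z / μ z) (by positivity)
      rw [Real.log_div (by positivity) h0.ne', Real.log_mul (by positivity) hz.ne',
        Real.log_mul hx.ne' hy.ne'] at hlog
      have := mul_le_mul_of_nonneg_left hlog h0.le
      have e : μ z * (μX z.1 * μY z.2 * h z / μ z - 1) = μX z.1 * μY z.2 * h z - μ z := by
        field_simp
      rw [e] at this
      linarith
  have hsum := Finset.sum_le_sum fun z (_ : z ∈ Finset.univ) => hpt z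
  simp only [Finset.sum_sub_distrib, Finset.sum_add_distrib] at hsum
  have hL : (∑ z, μ z * Real.logb 2 (h z)) * Real.log 2 = ∑ z, μ z * Real.log (h z) := by
    rw [Finset.sum_mul]
    refine Finset.sum_congr rfl fun a _ => ?_
    rw [Real.logb]
    field_simp
  rw [← mul_le_mul_iff_left₀ hl2, hL, hI]
  linarith

/-- An event of probability at most `2 ^ (-L)` under the product of the marginals
has probability at most `(I(X : Y) + 1) / L` under the joint distribution. -/
theorem prob_mul_le_mutInf_add_one {𝒳 𝒴 : Type*} [Fintype 𝒳] [Fintype 𝒴] (μ : 𝒳 × 𝒴 → ℝ)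
    (hμ : ∀ z, 0 ≤ μ z) (hμ1 : ∑ z, μ z = 1) (E : 𝒳 × 𝒴 → Prop) [DecidablePred E] (L : ℝ)
    (hE : ∑ z : 𝒳 × 𝒴, (if E z then 0 else (∑ b, μ (z.1, b)) * (∑ a, μ (a, z.2)))
      ≤ (2 : ℝ) ^ (-L)) :
    (∑ z, if E z then 0 else μ z) * L ≤ mutInf μ + 1 := by
  have hprod : ∑ z : 𝒳 × 𝒴, (∑ b, μ (z.1, b)) * (∑ a, μ (a, z.2)) = 1 := by
    rw [Fintype.sum_prod_type]
    simp only [← Finset.mul_sum, ← Finset.sum_mul]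
    rw [← Fintype.sum_prod_type, ← Fintype.sum_prod_type_right, hμ1, one_mul]
  have h2L : (0 : ℝ) < 2 ^ L := by positivity
  -- the tilt is `2 ^ L / 2` on the event and `1 / 2` off it
  have key := sum_mul_logb_le_mutInf μ hμ hμ1 (fun z => (if E z then 1 else (2 : ℝ) ^ L) / 2)
    (fun z => by split_ifs <;> positivity) (by
      calc _ ≤ ∑ z : 𝒳 × 𝒴, ((∑ b, μ (z.1, b)) * (∑ a, μ (a, z.2)) / 2
            + (if E z then 0 else (∑ b, μ (z.1, b)) * (∑ a, μ (a, z.2))) * (2 ^ L / 2)) := by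
            refine Finset.sum_le_sum fun z _ => ?_
            have : 0 ≤ (∑ b, μ (z.1, b)) * (∑ a, μ (a, z.2)) :=
              mul_nonneg (Finset.sum_nonneg fun _ _ => hμ _) (Finset.sum_nonneg fun _ _ => hμ _)
            split_ifs <;> linarith
        _ ≤ 1 / 2 + (2 : ℝ) ^ (-L) * (2 ^ L / 2) := by
            rw [Finset.sum_add_distrib, ← Finset.sum_div, ← Finset.sum_mul, hprod]
            gcongr
        _ = 1 := by
            rw [Real.rpow_neg (by norm_num)]
            field_simp
            norm_num)
  have e : ∑ z, μ z * Real.logb 2 ((if E z then 1 else (2 : ℝ) ^ L) / 2)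
      = (∑ z, if E z then 0 else μ z) * L - 1 := by
    conv_rhs => rw [← hμ1, Finset.sum_mul, ← Finset.sum_sub_distrib]
    refine Finset.sum_congr rfl fun z _ => ?_
    split_ifs
    · rw [Real.logb_div (by norm_num) (by norm_num), Real.logb_one,
        Real.logb_self_eq_one (by norm_num)]
      ring
    · rw [Real.logb_div h2L.ne' (by norm_num), Real.logb_rpow (by norm_num) (by norm_num),
        Real.logb_self_eq_one (by norm_num)]
      ring
  rw [e] at key
  linarith

theorem mutInf_nonneg {𝒳 𝒴 : Type*} [Fintype 𝒳] [Fintype 𝒴] (μ : 𝒳 × 𝒴 → ℝ)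
    (hμ : ∀ z, 0 ≤ μ z) (hμ1 : ∑ z, μ z = 1) : 0 ≤ mutInf μ := by
  have := sum_mul_logb_le_mutInf μ hμ hμ1 (fun _ => 1) (fun _ => one_pos) (by
    rw [Fintype.sum_prod_type]
    simp only [mul_one, ← Finset.mul_sum, ← Finset.sum_mul]
    rw [← Fintype.sum_prod_type, ← Fintype.sum_prod_type_right, hμ1, one_mul])
  simpa using this

/-! ### Size of a separated family -/

/-- Inverting the self-referential bound `N ≤ (m k + 1) ^ d` with `m ≈ 2 ln N / δ`,
where `ln N = d u` and `u ≤ 2 exp (u / 2)` absorbs the logarithm. -/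
theorem log_le_of_le_pow (N k d m : ℕ) (hk : 0 < k) (δ : ℝ) (hδ : 0 < δ) (hδ1 : δ ≤ 1)
    (hN : 2 ≤ N) (hd : 0 < d) (hm : (m : ℝ) ≤ 2 * Real.log N / δ + 1)
    (h : N ≤ (m * k + 1) ^ d) :
    Real.log N ≤ 2 * d * Real.log (12 * k * d / δ) := by
  have hk1 : (1 : ℝ) ≤ k := by exact_mod_cast hk
  have hd0 : (0 : ℝ) < d := by exact_mod_cast hd
  have hN0 : (0 : ℝ) < N := by positivity
  have hlN : 1 / 2 ≤ Real.log N := by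
    have h1 : Real.log 2 ≤ Real.log N := Real.log_le_log (by norm_num) (by exact_mod_cast hN)
    have := Real.log_two_gt_d9
    linarith
  set u := Real.log N / d with hu
  have hlog : Real.log N = d * u := by rw [hu]; field_simp
  have hu0 : 0 < u := by rw [hu]; positivity
  have h2 : (1 : ℝ) ≤ 2 * Real.log N / δ := by
    rw [le_div_iff₀ hδ]; linarith
  have hK : (m : ℝ) * k + 1 ≤ 6 * k * Real.log N / δ := by
    have h3 : (m : ℝ) ≤ 2 * (2 * Real.log N / δ) := by linarith
    have h4 : (m : ℝ) * k ≤ 2 * (2 * Real.log N / δ) * k := by gcongr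
    have h5 : (1 : ℝ) ≤ 2 * Real.log N / δ * k := by nlinarith
    have e : 6 * k * Real.log N / δ = 2 * (2 * Real.log N / δ) * k + 2 * Real.log N / δ * k := by
      ring
    linarith
  have hK0 : (0 : ℝ) < (m : ℝ) * k + 1 := by positivity
  have hexp : Real.exp u ≤ 6 * k * Real.log N / δ := by
    refine le_trans ?_ hK
    rw [← Real.le_log_iff_exp_le hK0, hu, div_le_iff₀ hd0, mul_comm, ← Real.log_pow]
    exact Real.log_le_log hN0 (by exact_mod_cast h)
  have hv : u ≤ 2 * Real.exp (u / 2) := by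
    have := Real.add_one_le_exp (u / 2)
    linarith
  have hsq : Real.exp u = Real.exp (u / 2) * Real.exp (u / 2) := by
    rw [← Real.exp_add]; congr 1; ring
  have hfin : Real.exp (u / 2) ≤ 12 * k * d / δ := by
    have h6 : 6 * k * Real.log N / δ ≤ 12 * k * d / δ * Real.exp (u / 2) := by
      have e : 6 * k * Real.log N / δ = 6 * k * d / δ * u := by rw [hlog]; ring
      have e' : 12 * k * d / δ * Real.exp (u / 2) = 6 * k * d / δ * (2 * Real.exp (u / 2)) := by
        ring
      rw [e, e']
      exact mul_le_mul_of_nonneg_left hv (by positivity)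
    rw [hsq] at hexp
    exact le_of_mul_le_mul_right (hexp.trans h6) (Real.exp_pos _)
  rw [← Real.le_log_iff_exp_le (by positivity)] at hfin
  rw [hlog]
  nlinarith

/-! ### The protocol -/

/-- There is a universal constant `κ > 0` such that for every `k ≥ 2`, every
`f : 𝒳 × 𝒴 → {1,…,k}`, every `ε ∈ (0,1/6)` and every (possibly non-product)
distribution `μ` on `𝒳 × 𝒴`, writing `f' = f/k` and `d` for the
`ε²/(576k²)`-pseudo-dimension of `f'`, there is a deterministic one-way
protocol `(a, b)` with message set `{1,…,N}` having distributional error at most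
`3ε` under `μ` and
`log₂ N ≤ κ · (k⁴/ε⁵) · (log₂(1/ε) + d·log₂²(dk/ε)) · (I(X:Y) + log₂ k)`. -/
theorem distributional_one_way_pseudodim_nonproduct :
    ∃ κ : ℝ, 0 < κ ∧
      ∀ (𝒳 𝒴 : Type) [Fintype 𝒳] [Fintype 𝒴] [Nonempty 𝒳] [Nonempty 𝒴]
        (k : ℕ) (_ : 2 ≤ k)
        (f : 𝒳 → 𝒴 → ℕ) (_ : ∀ x y, f x y ∈ Finset.Icc 1 k)
        (ε : ℝ) (_ : 0 < ε) (_ : ε < 1 / 6)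
        (d : ℕ)
        (_ : ∃ S : Finset 𝒴, S.card = d ∧
              PseudoShatters (ε ^ 2 / (576 * (k : ℝ) ^ 2))
                (fun x y => (f x y : ℝ) / k) S)
        (_ : ∀ S : Finset 𝒴,
              PseudoShatters (ε ^ 2 / (576 * (k : ℝ) ^ 2))
                (fun x y => (f x y : ℝ) / k) S → S.card ≤ d)
        (μ : 𝒳 × 𝒴 → ℝ) (_ : ∀ z, 0 ≤ μ z) (_ : ∑ z, μ z = 1),
        ∃ N : ℕ, 0 < N ∧
          ∃ (a : 𝒳 → Fin N) (b : Fin N → 𝒴 → ℕ),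
            (∀ i y, b i y ∈ Finset.Icc 1 k) ∧
            (∑ z : 𝒳 × 𝒴, if b (a z.1) z.2 = f z.1 z.2 then 0 else μ z) ≤ 3 * ε ∧
            Real.logb 2 N ≤
              κ * ((k : ℝ) ^ 4 / ε ^ 5) *
                (Real.logb 2 (1 / ε) +
                  d * (Real.logb 2 (d * k / ε)) ^ 2) *
                (mutInf μ + Real.logb 2 k) := by
  classical
  refine ⟨1, one_pos, ?_⟩
  intro 𝒳 𝒴 _ _ _ _ k hk f hf ε hε hε6 d _ hd μ hμ hμ1
  have hk2 : (2 : ℝ) ≤ k := by exact_mod_cast hk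
  have hI := mutInf_nonneg μ hμ hμ1
  set I := mutInf μ with hIdef
  set ν : 𝒴 → ℝ := fun b => ∑ a, μ (a, b) with hν
  have hν0 : ∀ y, 0 ≤ ν y := fun y => Finset.sum_nonneg fun _ _ => hμ _
  have hν1 : ∑ y, ν y = 1 := by rw [← hμ1, Fintype.sum_prod_type_right]
  set L : ℝ := (I + 1) / (3 * ε) with hL
  have hL0 : 0 < L := by rw [hL]; positivity
  set δ : ℝ := (2 : ℝ) ^ (-L) with hδ
  have hδ0 : 0 < δ := by rw [hδ]; positivity
  have hδ1 : δ ≤ 1 := Real.rpow_le_one_of_one_le_of_nonpos (by norm_num) (by linarith)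
  -- a maximal `δ`-separated set of inputs of Alice, hence a `δ`-net in `ν`-measure
  let sep : Finset 𝒳 → Prop := fun T =>
    ∀ x ∈ T, ∀ x' ∈ T, x ≠ x' → δ < ∑ y, if f x y = f x' y then 0 else ν y
  obtain ⟨T, hT, hmax⟩ := Finset.exists_max_image (Finset.univ.filter sep) Finset.card
    ⟨∅, by simp [sep]⟩
  replace hT : sep T := (Finset.mem_filter.1 hT).2
  have hnet : ∀ x, ∃ t ∈ T, (∑ y, if f t y = f x y then 0 else ν y) ≤ δ := by
    intro x
    by_contra! hcon
    have hxT : x ∉ T := fun hx => by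
      have := hcon x hx
      simp at this
      linarith
    have hs : sep (insert x T) := by
      intro a ha b hb hab
      rcases Finset.mem_insert.1 ha with rfl | ha'
      · rcases Finset.mem_insert.1 hb with rfl | hb'
        · exact absurd rfl hab
        · simpa only [eq_comm] using hcon b hb'
      · rcases Finset.mem_insert.1 hb with rfl | hb'
        · exact hcon a ha'
        · exact hT a ha' b hb' hab
    have := hmax _ (Finset.mem_filter.2 ⟨Finset.mem_univ _, hs⟩)
    rw [Finset.card_insert_of_notMem hxT] at this
    omega
  choose c hcT hc using hnet
  have hTpos : 0 < T.card := Finset.card_pos.2 ⟨_, hcT (Classical.arbitrary 𝒳)⟩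
  refine ⟨T.card, hTpos, fun x => T.equivFin ⟨c x, hcT x⟩, fun i y => f (T.equivFin.symm i) y,
    fun i y => hf _ _, ?_, ?_⟩
  · simp only [Equiv.symm_apply_apply]
    have hE := prob_mul_le_mutInf_add_one μ hμ hμ1 (fun z => f (c z.1) z.2 = f z.1 z.2) L (by
      calc _ = ∑ x, (∑ b, μ (x, b)) * ∑ y, (if f (c x) y = f x y then 0 else ν y) := by
            rw [Fintype.sum_prod_type]
            refine Finset.sum_congr rfl fun x _ => ?_
            rw [Finset.mul_sum]
            refine Finset.sum_congr rfl fun y _ => ?_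
            simp only [mul_ite, mul_zero, hν]
        _ ≤ ∑ x, (∑ b, μ (x, b)) * δ := by
            refine Finset.sum_le_sum fun x _ => ?_
            exact mul_le_mul_of_nonneg_left (hc x) (Finset.sum_nonneg fun _ _ => hμ _)
        _ = δ := by rw [← Finset.sum_mul, ← Fintype.sum_prod_type, hμ1, one_mul])
    rw [← hIdef] at hE
    have e : 3 * ε * L = I + 1 := by rw [hL]; field_simp
    rw [← e] at hE
    exact le_of_mul_le_mul_right hE hL0
  · have hlogk : 1 ≤ Real.logb 2 k := by
      rw [Real.le_logb_iff_rpow_le (by norm_num) (by linarith)]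
      simpa using hk2
    have hJ : 1 ≤ I + Real.logb 2 k := by linarith
    have hlε : 0 ≤ Real.logb 2 (1 / ε) := by
      apply Real.logb_nonneg (by norm_num)
      rw [le_div_iff₀ hε]
      linarith
    set N := T.card with hN
    have hN1 : (1 : ℝ) ≤ N := by exact_mod_cast hTpos
    set m : ℕ := ⌊2 * Real.log N / δ⌋₊ + 1 with hm
    have hlN0 : 0 ≤ Real.log N := Real.log_nonneg hN1
    have hm1 : 2 * Real.log N / δ < m := by
      rw [hm]; push_cast
      exact Nat.lt_floor_add_one _
    have hm2 : (m : ℝ) ≤ 2 * Real.log N / δ + 1 := by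
      rw [hm]; push_cast
      have := Nat.floor_le (a := 2 * Real.log N / δ) (by positivity)
      linarith
    obtain ⟨ω, hω⟩ := exists_separating_sample f ν hν0 hν1 δ T hT m (by
      rw [← hN]
      have hNpos : (0 : ℝ) < N := by linarith
      calc (N : ℝ) ^ 2 * Real.exp (-(δ * m))
          = Real.exp (2 * Real.log N - δ * m) := by
            rw [sub_eq_add_neg, Real.exp_add]
            congr 1
            rw [← Real.exp_log hNpos, ← Real.exp_nat_mul, Real.exp_log hNpos]
            norm_num
        _ < 1 := by
            rw [Real.exp_lt_one_iff]
            rw [div_lt_iff₀ hδ0] at hm1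
            linarith)
    have hγ : ε ^ 2 / (576 * (k : ℝ) ^ 2) * (2 * k) < 1 := by
      rw [div_mul_eq_mul_div, div_lt_one (by positivity)]
      have : ε ^ 2 ≤ 1 := by nlinarith
      nlinarith
    have hcard := card_le_of_separating k (by omega) f hf _ hγ d hd T m ω hω
    rw [← hN] at hcard
    have hRHS0 : 0 ≤ (d : ℝ) * (Real.logb 2 (d * k / ε)) ^ 2 := by positivity
    by_cases htriv : N = 1 ∨ d = 0
    · have hN' : N = 1 := by
        rcases htriv with h | h
        · exact h
        · rw [h, pow_zero] at hcard
          omega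
      rw [hN', Nat.cast_one, Real.logb_one]
      have h1 : 0 ≤ I + Real.logb 2 k := by linarith
      positivity
    push Not at htriv
    have hd0 : 0 < d := Nat.pos_of_ne_zero htriv.2
    have hd1 : (1 : ℝ) ≤ d := by exact_mod_cast hd0
    have hlog := log_le_of_le_pow N k d m (by omega) δ hδ0 hδ1 (by omega) hd0 hm2 hcard
    set J := I + Real.logb 2 k with hJdef
    set A := Real.logb 2 (d * k / ε) with hA
    have hdk : 2 ≤ (d : ℝ) * k := by nlinarith
    have hdkε : 2 ≤ (d : ℝ) * k / ε := by
      rw [le_div_iff₀ hε]; linarith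
    have hA1 : 1 ≤ A := by
      rw [hA, Real.le_logb_iff_rpow_le (by norm_num) (by linarith)]
      simpa using hdkε
    have hl2 : 0 < Real.log 2 := Real.log_pos (by norm_num)
    have h12 : Real.logb 2 (12 * k * d) ≤ 2 * A := by
      have e : 2 * A = Real.logb 2 ((d * k / ε) ^ 2) := by rw [Real.logb_pow, hA]; norm_num
      rw [e]
      apply Real.logb_le_logb_of_le (by norm_num) (by positivity)
      rw [div_pow, le_div_iff₀ (by positivity)]
      have : ε ^ 2 ≤ 1 / 36 := by nlinarith
      nlinarith
    have hlogN : Real.logb 2 N ≤ 2 * d * (2 * A + L) := by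
      have e1 : Real.logb 2 (12 * k * d / δ) = Real.logb 2 (12 * k * d) + L := by
        rw [Real.logb_div (by positivity) hδ0.ne', hδ, Real.logb_rpow (by norm_num) (by norm_num)]
        ring
      have e2 : Real.logb 2 N ≤ 2 * d * Real.logb 2 (12 * k * d / δ) := by
        rw [Real.logb, Real.logb, ← mul_div_assoc]
        exact div_le_div_of_nonneg_right hlog hl2.le
      rw [e1] at e2
      refine e2.trans ?_
      gcongr
    have hA2 : 1 ≤ A ^ 2 := one_le_pow₀ hA1
    have hAJ : A ≤ A ^ 2 * J :=
      (le_self_pow₀ hA1 two_ne_zero).trans (le_mul_of_one_le_right (by positivity) hJ)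
    have hIJ : I + 1 ≤ A ^ 2 * J :=
      le_trans (by linarith) (le_mul_of_one_le_left (by linarith) hA2)
    have hLb : L ≤ A ^ 2 * J / (3 * ε) := by rw [hL]; gcongr
    have hε1 : 1 ≤ 1 / ε := by rw [le_div_iff₀ hε]; linarith
    have hcoef : 4 + 2 / (3 * ε) ≤ 1 * ((k : ℝ) ^ 4 / ε ^ 5) := by
      have hk4 : (16 : ℝ) ≤ (k : ℝ) ^ 4 := by
        calc (16 : ℝ) = 2 ^ 4 := by norm_num
          _ ≤ (k : ℝ) ^ 4 := by gcongr
      have hε5 : ε ^ 5 ≤ ε := by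
        calc ε ^ 5 ≤ ε ^ 1 := pow_le_pow_of_le_one hε.le (by linarith) (by norm_num)
          _ = ε := pow_one ε
      calc 4 + 2 / (3 * ε) = 4 + 2 / 3 * (1 / ε) := by field_simp
        _ ≤ 16 * (1 / ε) := by linarith
        _ = 16 / ε := by ring
        _ ≤ (k : ℝ) ^ 4 / ε ^ 5 := by gcongr
        _ = 1 * ((k : ℝ) ^ 4 / ε ^ 5) := (one_mul _).symm
    calc Real.logb 2 N ≤ 2 * d * (2 * A + L) := hlogN
      _ ≤ 2 * d * (2 * (A ^ 2 * J) + A ^ 2 * J / (3 * ε)) := by gcongr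
      _ = (4 + 2 / (3 * ε)) * (d * A ^ 2) * J := by ring
      _ ≤ 1 * ((k : ℝ) ^ 4 / ε ^ 5) * (Real.logb 2 (1 / ε) + d * A ^ 2) * J := by
          gcongr
          linarith
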